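/- Let d ≥ 1, let 𝕋^d = ℝ^d/ℤ^d be the standard d-dimensional torus with quotient homomorphism π : ℝ^d → 𝕋^d. Let A be a d×d integer matrix with determinant ±1 which is hyperbolic: there are subspaces S, U of ℝ^d with ℝ^d = S ⊕ U, A(S) = S, A(U) = U, and constants C > 0, λ ∈ (0,1) such that ‖A^n s‖ ≤ Cλ^n‖s‖ and ‖A^{-n} u‖ ≤ Cλ^n‖u‖ for all n ≥ 0, s ∈ S, u ∈ U. Let L_A : 𝕋^d → 𝕋^d be the induced automorphism (L_A ∘ π = π ∘ (x ↦ Ax)). Let F : 𝕋^d → 𝕋^d be a homeomorphism for which there exists a continuous map r̃ : 𝕋^d → ℝ^d with L_A(x) = F(x) + π(r̃(x)) for all x ∈ 𝕋^d. Then there exists a continuous surjective map h : 𝕋^d → 𝕋^d, homotopic to the identity, such that h ∘ F = L_A ∘ h. -/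

import Mathlib

/-- The quotient homomorphism `π : ℝ^d → 𝕋^d = ℝ^d/ℤ^d`, with `𝕋^d`
realized as `Fin d → AddCircle 1`. -/
noncomputable def torusProj (d : ℕ) (x : Fin d → ℝ) : Fin d → AddCircle (1 : ℝ) :=
  fun i => (x i : AddCircle (1 : ℝ))

open MeasureTheory Polynomial

theorem interp_det (d : ℕ) (t0 : ℝ) (ht0 : 0 < t0) :
    ∃ (s : Finset ℕ) (v c : ℕ → ℝ), (∀ i ∈ s, 0 < v i ∧ v i ≤ t0) ∧ ∑ i ∈ s, c i = 1 ∧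
      ∀ M : (Fin d → ℝ) →L[ℝ] (Fin d → ℝ),
        (1 + M).det = ∑ i ∈ s, c i * (1 + v i • M).det := by
  have hinj : Set.InjOn (fun i : ℕ => t0 / (i + 1)) (Finset.range (d + 1) : Set ℕ) := by
    intro i _ j _ h
    have hi : (0 : ℝ) < i + 1 := by positivity
    have hj : (0 : ℝ) < j + 1 := by positivity
    simp only at h
    rw [div_eq_div_iff hi.ne' hj.ne'] at h
    have := mul_left_cancel₀ ht0.ne' h
    have h2 : (j : ℝ) = i := by linarith
    exact_mod_cast h2.symm
  have key : ∀ p : ℝ[X], p.degree < (d + 1 : ℕ) →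
      p.eval 1 = ∑ i ∈ Finset.range (d + 1),
        (Lagrange.basis (Finset.range (d + 1)) (fun i : ℕ => t0 / (i + 1)) i).eval 1 *
          p.eval (t0 / (i + 1)) := by
    intro p hp
    have h := Lagrange.eq_interpolate (f := p) hinj (by simpa using hp)
    conv_lhs => rw [h]
    rw [Lagrange.interpolate_apply, eval_finsetSum]
    refine Finset.sum_congr rfl fun i _ => ?_
    simp [mul_comm]
  refine ⟨Finset.range (d + 1), fun i => t0 / (i + 1), fun i =>
    (Lagrange.basis (Finset.range (d + 1)) (fun i : ℕ => t0 / (i + 1)) i).eval 1, ?_, ?_, ?_⟩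
  · intro i _
    refine ⟨by positivity, ?_⟩
    apply div_le_self ht0.le
    have : (0 : ℝ) ≤ i := by positivity
    linarith
  · have := key 1 (by rw [degree_one]; exact_mod_cast Nat.succ_pos d)
    simpa using this.symm
  · intro M
    set N := LinearMap.toMatrix' (M : (Fin d → ℝ) →ₗ[ℝ] (Fin d → ℝ)) with hN
    have hdet : ∀ t : ℝ, (1 + t • M).det =
        (Matrix.det ((X : ℝ[X]) • N.map C + (1 : Matrix (Fin d) (Fin d) ℝ).map C)).eval t := by
      intro t
      rw [ContinuousLinearMap.det, ← LinearMap.det_toMatrix', ← coe_evalRingHom, RingHom.map_det]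
      congr 1
      ext i j
      by_cases hij : i = j
      · subst hij
        simp [hN, LinearMap.toMatrix'_apply, add_comm]
        exact mul_comm _ _
      · simp [hN, LinearMap.toMatrix'_apply, hij]
        exact mul_comm _ _
    have hdeg := natDegree_det_X_add_C_le N (1 : Matrix (Fin d) (Fin d) ℝ)
    rw [Fintype.card_fin] at hdeg
    have h1 := key _ (lt_of_le_of_lt degree_le_natDegree
      (Nat.cast_lt.mpr (Nat.lt_succ_of_le hdeg)))
    simp only [← hdet] at h1
    simpa using h1

/-- small perturbations -/
theorem det_small (d : ℕ) (g : (Fin d → ℝ) → (Fin d → ℝ)) (hg : Differentiable ℝ g)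
    (hper : ∀ v ∈ Submodule.span ℤ (Set.range (Pi.basisFun ℝ (Fin d))), ∀ x, g (x + v) = g x)
    (K : NNReal) (hK : K < 1) (hL : LipschitzWith K g) :
    ∫⁻ x in ZSpan.fundamentalDomain (Pi.basisFun ℝ (Fin d)),
      ENNReal.ofReal |(1 + fderiv ℝ g x).det| = 1 := by
  set b := Pi.basisFun ℝ (Fin d)
  set D := ZSpan.fundamentalDomain b
  set f : (Fin d → ℝ) → (Fin d → ℝ) := fun x => x + g x with hf
  have hdist : ∀ x y, ‖g x - g y‖ ≤ K * ‖x - y‖ := fun x y => by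
    simpa [dist_eq_norm] using hL.dist_le_mul x y
  have hinj : Function.Injective f := by
    intro x y h
    have h1 : x - y = -(g x - g y) := by
      simp only [hf] at h
      have : x - y = g y - g x := by rw [sub_eq_sub_iff_add_eq_add, add_comm (g y)]; simpa using h
      rw [this]; abel
    have h2 := hdist x y
    have h3 : ‖x - y‖ = ‖g x - g y‖ := by rw [h1, norm_neg]
    have hK' : (K : ℝ) < 1 := by exact_mod_cast hK
    have : ‖x - y‖ = 0 := by nlinarith [norm_nonneg (x - y)]
    exact sub_eq_zero.mp (norm_eq_zero.mp this)
  have hsurj : Function.Surjective f := by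
    intro y
    have hc : ContractingWith K (fun x => y - g x) := by
      refine ⟨hK, LipschitzWith.of_dist_le_mul fun a b => ?_⟩
      rw [dist_eq_norm, dist_eq_norm]
      have := hdist b a
      rw [norm_sub_rev b a] at this
      simpa using this
    refine ⟨hc.fixedPoint, ?_⟩
    have := hc.fixedPoint_isFixedPt
    simp only [Function.IsFixedPt] at this
    simp only [hf]
    nth_rewrite 1 [← this]
    abel
  have hderiv : ∀ x, HasFDerivAt f (1 + fderiv ℝ g x) x := fun x =>
    (hasFDerivAt_id x).add (hg x).hasFDerivAt
  have hDm : MeasurableSet D := ZSpan.fundamentalDomain_measurableSet b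
  rw [lintegral_abs_det_fderiv_eq_addHaar_image volume hDm
    (fun x _ => (hderiv x).hasFDerivWithinAt) hinj.injOn]
  have hfd : IsAddFundamentalDomain (Submodule.span ℤ (Set.range b)) (f '' D) volume := by
    refine IsAddFundamentalDomain.mk' ?_ ?_
    · have : Continuous f := continuous_id.add hg.continuous
      exact (hDm.image_of_continuousOn_injOn this.continuousOn hinj.injOn).nullMeasurableSet
    · intro y
      obtain ⟨x, rfl⟩ := hsurj y
      have hiff : ∀ v : Submodule.span ℤ (Set.range b), v +ᵥ f x ∈ f '' D ↔ v +ᵥ x ∈ D := by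
        intro v
        have : v +ᵥ f x = f (v +ᵥ x) := by
          have := hper v v.2 x
          simp only [hf, Submodule.vadd_def, vadd_eq_add]
          rw [add_comm (v : Fin d → ℝ) x, this]; abel
        rw [this, hinj.mem_set_image]
      simp only [hiff]
      exact ZSpan.exist_unique_vadd_mem_fundamentalDomain b x
  have h0 := ZSpan.isAddFundamentalDomain b (volume : Measure (Fin d → ℝ))
  have : VAddInvariantMeasure (Submodule.span ℤ (Set.range b)) (Fin d → ℝ) volume :=
    ⟨fun c s _ => measure_preimage_add volume (c : Fin d → ℝ) s⟩
  rw [hfd.measure_eq h0, ZSpan.volume_fundamentalDomain]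
  have : Matrix.of ⇑b = (1 : Matrix (Fin d) (Fin d) ℝ) := by
    ext i j
    simp [b, Pi.single_apply, Matrix.one_apply, eq_comm]
  simp [this]

theorem det_pos_of_small (d : ℕ) (N : (Fin d → ℝ) →L[ℝ] (Fin d → ℝ)) (hN : ‖N‖ < 1) :
    0 < (1 + N).det := by
  have hne : ∀ t ∈ Set.Icc (0 : ℝ) 1, (1 + t • N).det ≠ 0 := by
    intro t ht
    have hlt : ‖-(t • N)‖ < 1 := by
      rw [norm_neg, norm_smul, Real.norm_of_nonneg ht.1]
      nlinarith [ht.2, norm_nonneg N]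
    have hu : IsUnit (1 + t • N) := by
      have := (Units.oneSub _ hlt).isUnit
      simpa using this
    have h2 : IsUnit (LinearMap.det ((1 + t • N : (Fin d → ℝ) →L[ℝ] (Fin d → ℝ)) :
        (Fin d → ℝ) →ₗ[ℝ] (Fin d → ℝ))) := by
      have := hu.map (ContinuousLinearMap.toLinearMapRingHom :
        ((Fin d → ℝ) →L[ℝ] (Fin d → ℝ)) →+* ((Fin d → ℝ) →ₗ[ℝ] (Fin d → ℝ)))
      exact this.map LinearMap.det
    exact h2.ne_zero
  by_contra hcon
  push Not at hcon
  have hc : Continuous (fun t : ℝ => (1 + t • N).det) :=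
    ContinuousLinearMap.continuous_det.comp (by fun_prop)
  have h01 := intermediate_value_Icc' (zero_le_one (α := ℝ)) hc.continuousOn
  have : (0 : ℝ) ∈ Set.Icc ((1 + (1 : ℝ) • N).det) ((1 + (0 : ℝ) • N).det) := by
    refine ⟨by simpa using hcon, ?_⟩
    simp [ContinuousLinearMap.det]
  obtain ⟨t, ht, h⟩ := h01 this
  exact hne t ht h

theorem fderiv_bdd (d : ℕ) (g : (Fin d → ℝ) → (Fin d → ℝ)) (hg : ContDiff ℝ 1 g)
    (hper : ∀ v ∈ Submodule.span ℤ (Set.range (Pi.basisFun ℝ (Fin d))), ∀ x, g (x + v) = g x) :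
    ∃ M : ℝ, 0 ≤ M ∧ ∀ x, ‖fderiv ℝ g x‖ ≤ M := by
  set b := Pi.basisFun ℝ (Fin d)
  have hcomp : IsCompact (closure (ZSpan.fundamentalDomain b)) :=
    (ZSpan.fundamentalDomain_isBounded b).isCompact_closure
  have hcont : Continuous (fderiv ℝ g) := hg.continuous_fderiv one_ne_zero
  obtain ⟨M, hM⟩ := hcomp.exists_bound_of_continuousOn hcont.continuousOn
  have hMall : ∀ x, ‖fderiv ℝ g x‖ ≤ M := by
    intro x
    obtain ⟨v, hv, -⟩ := ZSpan.exist_unique_vadd_mem_fundamentalDomain b x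
    have h1 : fderiv ℝ g x = fderiv ℝ g (x + v) := by
      have : (fun y => g (y + v)) = g := funext fun y => hper v v.2 y
      conv_lhs => rw [← this]
      rw [fderiv_comp_add_right]
    rw [h1]
    apply hM
    apply subset_closure
    simpa [Submodule.vadd_def, add_comm] using hv
  exact ⟨M, (norm_nonneg _).trans (hMall 0), hMall⟩

theorem det_integral (d : ℕ) (g : (Fin d → ℝ) → (Fin d → ℝ)) (hg : ContDiff ℝ 1 g)
    (hper : ∀ v ∈ Submodule.span ℤ (Set.range (Pi.basisFun ℝ (Fin d))), ∀ x, g (x + v) = g x) :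
    ∫ x in ZSpan.fundamentalDomain (Pi.basisFun ℝ (Fin d)), (1 + fderiv ℝ g x).det = 1 := by
  obtain ⟨M, hM0, hM⟩ := fderiv_bdd d g hg hper
  have hcont : Continuous (fderiv ℝ g) := hg.continuous_fderiv one_ne_zero
  have hgd : Differentiable ℝ g := hg.differentiable one_ne_zero
  set D := ZSpan.fundamentalDomain (Pi.basisFun ℝ (Fin d))
  have hci : ∀ t : ℝ, Continuous (fun x => (1 + t • fderiv ℝ g x).det) := fun t =>
    ContinuousLinearMap.continuous_det.comp (by fun_prop)
  have hIntg : ∀ t : ℝ, IntegrableOn (fun x => (1 + t • fderiv ℝ g x).det) D volume := by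
    intro t
    have hcomp : IsCompact (closure D) :=
      (ZSpan.fundamentalDomain_isBounded (Pi.basisFun ℝ (Fin d))).isCompact_closure
    exact ((hci t).continuousOn.integrableOn_compact hcomp).mono_set subset_closure
  obtain ⟨s, v, c, hv, hc, hdet⟩ := interp_det d (1 / (2 * (M + 1))) (by positivity)
  have hone : ∀ i ∈ s, ∫ x in D, (1 + v i • fderiv ℝ g x).det = 1 := by
    intro i hi
    obtain ⟨hv0, hv1⟩ := hv i hi
    have hvM : v i * M ≤ 1 / 2 := by
      rw [le_div_iff₀ (by positivity)] at hv1
      nlinarith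
    have hnorm : ∀ x, ‖v i • fderiv ℝ g x‖ ≤ 1 / 2 := by
      intro x
      rw [norm_smul, Real.norm_of_nonneg hv0.le]
      exact (mul_le_mul_of_nonneg_left (hM x) hv0.le).trans hvM
    have hfd : ∀ x, fderiv ℝ (fun y => v i • g y) x = v i • fderiv ℝ g x := fun x =>
      fderiv_fun_const_smul (hgd x) (v i)
    have hL : LipschitzWith (1 / 2) (fun y => v i • g y) := by
      apply lipschitzWith_of_nnnorm_fderiv_le (𝕜 := ℝ) (hgd.const_smul (v i))
      intro x
      change ‖fderiv ℝ (fun y => v i • g y) x‖₊ ≤ 1 / 2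
      rw [hfd]
      have := hnorm x
      rw [← NNReal.coe_le_coe]
      simpa using this
    have h1 := det_small d (fun y => v i • g y) (hgd.const_smul (v i))
      (fun w hw x => by simp only [hper w hw x]) (1 / 2) (by
        rw [← NNReal.coe_lt_coe]; norm_num) hL
    have hpos : ∀ x, 0 < (1 + v i • fderiv ℝ g x).det := fun x =>
      det_pos_of_small d _ ((hnorm x).trans_lt (by norm_num))
    rw [integral_eq_lintegral_of_nonneg_ae (Filter.Eventually.of_forall fun x => (hpos x).le)
      (hci _).aestronglyMeasurable]
    have h2 : ∫⁻ x in D, ENNReal.ofReal ((1 + v i • fderiv ℝ g x).det) = 1 := by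
      rw [← h1]
      refine lintegral_congr fun x => ?_
      rw [hfd, abs_of_pos (hpos x)]
    rw [h2]; simp
  rw [integral_congr_ae (Filter.Eventually.of_forall fun x => hdet (fderiv ℝ g x))]
  rw [integral_finsetSum _ (fun i _ => (hIntg (v i)).const_mul (c i))]
  rw [← hc]
  refine Finset.sum_congr rfl fun i hi => ?_
  rw [integral_const_mul, hone i hi, mul_one]

theorem span_int (d : ℕ) (v : Fin d → ℝ)
    (hv : v ∈ Submodule.span ℤ (Set.range (Pi.basisFun ℝ (Fin d)))) (i : Fin d) :
    ∃ n : ℤ, v i = n := by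
  obtain ⟨n, hn⟩ := ((Pi.basisFun ℝ (Fin d)).mem_span_iff_repr_mem ℤ v).mp hv i
  exact ⟨n, by simpa using hn.symm⟩

theorem torusProj_add_span (d : ℕ) (v : Fin d → ℝ)
    (hv : v ∈ Submodule.span ℤ (Set.range (Pi.basisFun ℝ (Fin d)))) (x : Fin d → ℝ) :
    torusProj d (x + v) = torusProj d x := by
  funext i
  obtain ⟨n, hn⟩ := span_int d v hv i
  simp only [torusProj, Pi.add_apply, hn, AddCircle.coe_add]
  have : ((n : ℝ) : AddCircle (1 : ℝ)) = 0 := (AddCircle.coe_eq_zero_iff 1).mpr ⟨n, by simp⟩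
  rw [this, add_zero]

theorem exists_collapse (c : ℝ) (hc : c < 1) :
    ∃ p p' : ℝ → ℝ, Continuous p' ∧ (∀ y, HasDerivAt p (p' y) y) ∧
      (∀ (y : ℝ) (n : ℤ), p (y + n) = p y + n) ∧
      ∀ y, Real.cos (2 * Real.pi * y) ≤ c → p' y = 0 := by
  set φ : ℝ → ℝ := fun y => max 0 (Real.cos (2 * Real.pi * y) - c) with hφ
  have hφc : Continuous φ := by fun_prop
  have hφp : Function.Periodic φ 1 := by
    intro y
    simp only [hφ, mul_add, mul_one, Real.cos_add_two_pi]
  set I := ∫ y in (0:ℝ)..1, φ y with hI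
  have hIpos : 0 < I := by
    apply intervalIntegral.integral_pos one_pos hφc.continuousOn
    · intro y _; exact le_max_left _ _
    · exact ⟨0, by simp, by simp [hφ, hc]⟩
  set p : ℝ → ℝ := fun y => (∫ z in (0:ℝ)..y, φ z) / I with hp
  refine ⟨p, fun y => φ y / I, hφc.div_const I, ?_, ?_, ?_⟩
  · intro y
    exact (hφc.integral_hasStrictDerivAt 0 y).hasDerivAt.div_const I
  · have h1 : Function.Periodic (fun y => p y - y) 1 := by
      intro y
      have h2 : (∫ z in (0:ℝ)..(y+1), φ z) = (∫ z in (0:ℝ)..y, φ z) + I := by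
        rw [← intervalIntegral.integral_add_adjacent_intervals (hφc.intervalIntegrable 0 y)
          (hφc.intervalIntegrable y (y+1)), hφp.intervalIntegral_add_eq y 0, zero_add]
      simp only [hp, h2]
      field_simp
      ring
    intro y n
    have := h1.int_mul n y
    simp only [mul_one] at this
    linarith
  · intro y hy
    have : φ y = 0 := max_eq_left (by linarith)
    simp [this]

theorem smooth_hit (d : ℕ) (g : (Fin d → ℝ) → (Fin d → ℝ)) (hg : ContDiff ℝ 1 g)
    (hper : ∀ v ∈ Submodule.span ℤ (Set.range (Pi.basisFun ℝ (Fin d))), ∀ x, g (x + v) = g x)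
    (q : Fin d → ℝ) (c : ℝ) (hc : c < 1) :
    ∃ x, ∀ i, c < Real.cos (2 * Real.pi * (x i + g x i - q i)) := by
  by_contra hcon
  push Not at hcon
  obtain ⟨p, p', hp'c, hp', hpn, hp0⟩ := exists_collapse c hc
  have hpC : ContDiff ℝ 1 p := by
    rw [contDiff_one_iff_deriv]
    refine ⟨fun y => (hp' y).differentiableAt, ?_⟩
    have : deriv p = p' := funext fun y => (hp' y).deriv
    rwa [this]
  set G : (Fin d → ℝ) → (Fin d → ℝ) := fun x i => p (x i + g x i - q i) with hG
  have hgi : ∀ i, ContDiff ℝ 1 (fun x => g x i) := fun i => contDiff_pi.mp hg i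
  have hGC : ContDiff ℝ 1 G := by
    rw [contDiff_pi]
    intro i
    exact hpC.comp (((contDiff_apply ℝ ℝ i).add (hgi i)).sub contDiff_const)
  have hIntg := det_integral d (fun x => G x - x) (hGC.sub contDiff_id) (by
    intro v hv x
    funext i
    obtain ⟨n, hn⟩ := span_int d v hv i
    simp only [hG, Pi.sub_apply, Pi.add_apply, hper v hv x, hn]
    have : x i + n + g x i - q i = (x i + g x i - q i) + n := by ring
    rw [this, hpn]; ring)
  have hGd : Differentiable ℝ G := hGC.differentiable one_ne_zero
  have hzero : ∀ x, (1 + fderiv ℝ (fun x => G x - x) x).det = 0 := by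
    intro x
    have h1 : 1 + fderiv ℝ (fun x => G x - x) x = fderiv ℝ G x := by
      have := ((hGd x).hasFDerivAt.sub (hasFDerivAt_id x)).fderiv
      change fderiv ℝ (fun x => G x - x) x = _ at this
      rw [this]
      change ContinuousLinearMap.id ℝ _ + _ = _
      abel
    rw [h1]
    obtain ⟨i, hi⟩ := hcon x
    have hrow : ∀ v, fderiv ℝ G x v i = 0 := by
      intro v
      have ha : HasFDerivAt (fun y => G y i)
          ((ContinuousLinearMap.proj i).comp (fderiv ℝ G x)) x :=
        (hasFDerivAt_pi'.mp (hGd x).hasFDerivAt) i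
      have hinner : DifferentiableAt ℝ (fun y : Fin d → ℝ => y i + g y i - q i) x :=
        (((contDiff_apply ℝ ℝ i).add (hgi i)).sub contDiff_const).differentiable
          one_ne_zero x
      have hb := (hp' (x i + g x i - q i)).comp_hasFDerivAt x hinner.hasFDerivAt
      have := ha.unique hb
      have h2 := congrArg (fun L => L v) this
      simpa [hp0 _ hi] using h2
    by_contra hne
    have e := LinearMap.equivOfDetNeZero (fderiv ℝ G x : (Fin d → ℝ) →ₗ[ℝ] (Fin d → ℝ)) hne
    have hs := (LinearMap.equivOfDetNeZero
      (fderiv ℝ G x : (Fin d → ℝ) →ₗ[ℝ] (Fin d → ℝ)) hne).surjective (Pi.single i 1)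
    obtain ⟨v, hv⟩ := hs
    have h3 : fderiv ℝ G x v = Pi.single i 1 := hv
    have h4 := hrow v
    rw [h3] at h4
    simp at h4
  simp [hzero] at hIntg

theorem torusProj_surjective (d : ℕ) : Function.Surjective (torusProj d) := by
  intro y
  choose x hx using fun i => QuotientAddGroup.mk_surjective (y i)
  exact ⟨x, funext hx⟩

theorem torusProj_continuous (d : ℕ) : Continuous (torusProj d) := by
  unfold torusProj
  exact continuous_pi fun i => (AddCircle.continuous_mk' 1).comp (continuous_apply i)

theorem approx_scalar (d : ℕ) (f : (Fin d → AddCircle (1 : ℝ)) → ℝ) (hf : Continuous f)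
    (ε : ℝ) (hε : 0 < ε) :
    ∃ g : (Fin d → AddCircle (1 : ℝ)) → ℝ, ContDiff ℝ 1 (fun x => g (torusProj d x)) ∧
      ∀ y, |g y - f y| < ε := by
  let fc : C(UnitAddTorus (Fin d), ℂ) := ⟨fun y => (f y : ℂ), Complex.continuous_ofReal.comp hf⟩
  have hmem : fc ∈ (Submodule.span ℂ
      (Set.range (UnitAddTorus.mFourier (d := Fin d)))).topologicalClosure := by
    rw [UnitAddTorus.span_mFourier_closure_eq_top]; trivial
  rw [← SetLike.mem_coe, Submodule.topologicalClosure_coe, Metric.mem_closure_iff] at hmem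
  obtain ⟨p, hp, hdist⟩ := hmem ε hε
  refine ⟨fun y => (p y).re, ?_, ?_⟩
  · suffices h : ContDiff ℝ 1 (fun x => p (torusProj d x)) from
      Complex.reCLM.contDiff.comp h
    clear hdist
    induction hp using Submodule.span_induction with
    | mem p hp =>
      obtain ⟨n, rfl⟩ := hp
      simp only [UnitAddTorus.mFourier, ContinuousMap.coe_mk, torusProj, fourier_coe_apply]
      refine contDiff_prod fun i _ => ?_
      refine ContDiff.cexp ?_
      refine ContDiff.div_const (contDiff_const.mul ?_) _
      exact Complex.ofRealCLM.contDiff.comp (contDiff_apply ℝ ℝ i)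
    | zero => exact contDiff_const
    | add p r _ _ h1 h2 => exact h1.add h2
    | smul a p _ h => exact contDiff_const.mul h
  · intro y
    have h1 : ‖(fc - p) y‖ < ε := by
      refine lt_of_le_of_lt ((fc - p).norm_coe_le_norm y) ?_
      rwa [← dist_eq_norm]
    have h2 := (Complex.abs_re_le_norm ((fc - p) y)).trans_lt h1
    rw [abs_sub_comm]
    simpa [fc] using h2

theorem surj_of_homotopic (d : ℕ) (w : (Fin d → AddCircle (1 : ℝ)) → (Fin d → ℝ))
    (hw : Continuous w) : Function.Surjective (fun y => y + torusProj d (w y)) := by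
  intro q'
  obtain ⟨q, rfl⟩ := torusProj_surjective d q'
  have step : ∀ c : ℝ, c < 1 → ∃ x : Fin d → ℝ, ∀ i,
      c < Real.cos (2 * Real.pi * (x i + w (torusProj d x) i - q i)) := by
    intro c hc
    have hε : 0 < (1 - c) / (4 * Real.pi) := by
      have := Real.pi_pos
      have : 0 < 1 - c := by linarith
      positivity
    choose g hgC hg using fun i : Fin d => approx_scalar d (fun y => w y i)
      ((continuous_apply i).comp hw) _ hε
    obtain ⟨x, hx⟩ := smooth_hit d (fun x i => g i (torusProj d x)) (contDiff_pi.mpr hgC)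
      (fun v hv x => by simp only [torusProj_add_span d v hv x]) q ((1 + c) / 2) (by linarith)
    refine ⟨x, fun i => ?_⟩
    have h1 := hx i
    have h2 := Real.abs_cos_sub_cos_le
      (2 * Real.pi * (x i + g i (torusProj d x) - q i))
      (2 * Real.pi * (x i + w (torusProj d x) i - q i))
    have h3 : 2 * Real.pi * (x i + g i (torusProj d x) - q i) -
      2 * Real.pi * (x i + w (torusProj d x) i - q i) =
      2 * Real.pi * (g i (torusProj d x) - w (torusProj d x) i) := by ring
    have h4 := hg i (torusProj d x)
    rw [h3, abs_mul, abs_of_pos Real.two_pi_pos] at h2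
    have h5 : 2 * Real.pi * |g i (torusProj d x) - w (torusProj d x) i| < (1 - c) / 2 := by
      calc _ < 2 * Real.pi * ((1 - c) / (4 * Real.pi)) :=
            mul_lt_mul_of_pos_left h4 Real.two_pi_pos
        _ = (1 - c) / 2 := by field_simp; ring
    have h6 := (abs_le.mp (h2.trans h5.le)).2
    linarith
  set m : Fin d → (Fin d → AddCircle (1 : ℝ)) → ℝ := fun i y =>
    (fourier 1 ((y + torusProj d (w y)) i - torusProj d q i) : ℂ).re with hm
  have hmx : ∀ i x, m i (torusProj d x) =
      Real.cos (2 * Real.pi * (x i + w (torusProj d x) i - q i)) := by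
    intro i x
    simp only [hm, Pi.add_apply]
    have : torusProj d x i + torusProj d (w (torusProj d x)) i - torusProj d q i =
      ((x i + w (torusProj d x) i - q i : ℝ) : AddCircle (1 : ℝ)) := by
      simp [torusProj]
    rw [this, fourier_coe_apply, ← Complex.exp_ofReal_mul_I_re]
    congr 2
    push_cast
    ring
  have hmc : ∀ i, Continuous (m i) := by
    intro i
    refine Complex.continuous_re.comp ((fourier 1).continuous.comp ?_)
    have := (torusProj_continuous d).comp hw
    have h1 := (continuous_apply i).comp (continuous_id.add this)
    exact h1.sub continuous_const
  obtain ⟨y0, -, hy0⟩ := isCompact_univ.exists_isMaxOn (Set.univ_nonempty)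
    (continuous_finsetSum Finset.univ fun i _ => hmc i).continuousOn
  obtain ⟨x0, rfl⟩ := torusProj_surjective d y0
  have hle : ∀ i, m i (torusProj d x0) ≤ 1 := fun i => by rw [hmx]; exact Real.cos_le_one _
  have hge : (d : ℝ) ≤ ∑ i, m i (torusProj d x0) := by
    by_contra hlt
    push Not at hlt
    have hd : (0 : ℝ) < d := by
      rcases Nat.eq_zero_or_pos d with h | h
      · subst h; simp at hlt
      · exact_mod_cast h
    obtain ⟨x, hx⟩ := step ((∑ i, m i (torusProj d x0)) / d) ((div_lt_one hd).mpr hlt)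
    have h1 := hy0 (Set.mem_univ (torusProj d x))
    simp only [Set.mem_ofPred_eq] at h1
    have h2 : ∑ i : Fin d, (∑ i, m i (torusProj d x0)) / d < ∑ i, m i (torusProj d x) := by
      apply Finset.sum_lt_sum_of_nonempty
      · exact Finset.univ_nonempty_iff.mpr ⟨⟨0, by exact_mod_cast hd⟩⟩
      · intro i _; rw [hmx]; exact hx i
    simp only [Finset.sum_const, Finset.card_univ, Fintype.card_fin, nsmul_eq_mul] at h2
    rw [mul_div_cancel₀ _ hd.ne'] at h2
    linarith
  have hsum : ∑ i, (1 - m i (torusProj d x0)) = 0 := by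
    apply le_antisymm
    · simpa using hge
    · exact Finset.sum_nonneg fun i _ => by linarith [hle i]
  refine ⟨torusProj d x0, ?_⟩
  funext i
  have hi := (Finset.sum_eq_zero_iff_of_nonneg (fun i _ => by linarith [hle i])).mp hsum i
    (Finset.mem_univ i)
  have hi1 : m i (torusProj d x0) = 1 := by linarith
  rw [hmx, Real.cos_eq_one_iff] at hi1
  obtain ⟨n, hn⟩ := hi1
  have h5 : x0 i + w (torusProj d x0) i - q i = n := by
    have := Real.two_pi_pos.ne'
    have h6 : (2 * Real.pi) * (x0 i + w (torusProj d x0) i - q i) = (2 * Real.pi) * n := by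
      rw [← hn]; ring
    exact mul_left_cancel₀ this h6
  have h7 : x0 i + w (torusProj d x0) i = q i + n := by linarith
  simp only [Pi.add_apply, torusProj]
  change ((x0 i : ℝ) : AddCircle (1 : ℝ)) + ((w (torusProj d x0) i : ℝ) : AddCircle (1 : ℝ)) = _
  rw [← AddCircle.coe_add, h7, AddCircle.coe_add]
  have : ((n : ℝ) : AddCircle (1 : ℝ)) = 0 := (AddCircle.coe_eq_zero_iff 1).mpr ⟨n, by simp⟩
  rw [this, add_zero]

theorem solve_contract {T : Type*} [TopologicalSpace T] [CompactSpace T] (d : ℕ)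
    (B : (Fin d → ℝ) →ₗ[ℝ] (Fin d → ℝ)) (V : Submodule ℝ (Fin d → ℝ))
    (C lam : ℝ) (hC : 0 < C) (hlam0 : 0 < lam) (hlam1 : lam < 1)
    (hB : ∀ n : ℕ, ∀ s ∈ V, ‖(B ^ n) s‖ ≤ C * lam ^ n * ‖s‖)
    (G : T → T) (hG : Continuous G) (r : T → (Fin d → ℝ)) (hr : Continuous r)
    (hrV : ∀ x, r x ∈ V) :
    ∃ w : T → (Fin d → ℝ), Continuous w ∧ ∀ x, w x = B (w (G x)) + r x := by
  obtain ⟨M, hM⟩ := isCompact_univ.exists_bound_of_continuousOn hr.continuousOn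
  have hbound : ∀ n x, ‖(B ^ n) (r (G^[n] x))‖ ≤ C * lam ^ n * M := fun n x =>
    (hB n _ (hrV _)).trans (mul_le_mul_of_nonneg_left (hM _ (Set.mem_univ _)) (by positivity))
  have hsum : Summable (fun n : ℕ => C * lam ^ n * M) :=
    ((summable_geometric_of_lt_one hlam0.le hlam1).mul_left C).mul_right M
  have hs : ∀ x, Summable (fun n => (B ^ n) (r (G^[n] x))) := fun x =>
    Summable.of_norm_bounded hsum (fun n => hbound n x)
  have hBc : ∀ L : (Fin d → ℝ) →ₗ[ℝ] (Fin d → ℝ), Continuous L := fun L =>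
    L.continuous_of_finiteDimensional
  refine ⟨fun x => ∑' n, (B ^ n) (r (G^[n] x)), ?_, ?_⟩
  · exact continuous_tsum (fun n => (hBc _).comp (hr.comp (hG.iterate n))) hsum hbound
  · intro x
    have h1 := (hs (G x)).map_tsum B (hBc B)
    simp only [h1]
    rw [(hs x).tsum_eq_zero_add, add_comm]
    congr 1
    refine tsum_congr fun n => ?_
    rw [pow_succ', Function.iterate_succ_apply]
    rfl

theorem stmt11
    (d : ℕ) (hd : 1 ≤ d)
    (A : Matrix (Fin d) (Fin d) ℤ) (hdet : A.det = 1 ∨ A.det = -1)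
    (S U : Submodule ℝ (Fin d → ℝ)) (hSU : IsCompl S U)
    (hAS : S.map (A.map (Int.cast : ℤ → ℝ)).mulVecLin = S)
    (hAU : U.map (A.map (Int.cast : ℤ → ℝ)).mulVecLin = U)
    (C lam : ℝ) (hC : 0 < C) (hlam0 : 0 < lam) (hlam1 : lam < 1)
    (hstab : ∀ n : ℕ, ∀ s ∈ S,
      ‖((A.map (Int.cast : ℤ → ℝ)).mulVecLin ^ n) s‖ ≤ C * lam ^ n * ‖s‖)
    (hunst : ∀ n : ℕ, ∀ u ∈ U,
      ‖(((A.map (Int.cast : ℤ → ℝ))⁻¹).mulVecLin ^ n) u‖ ≤ C * lam ^ n * ‖u‖)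
    (LA : (Fin d → AddCircle (1 : ℝ)) → (Fin d → AddCircle (1 : ℝ)))
    (hLA : ∀ x : Fin d → ℝ,
      LA (torusProj d x) = torusProj d ((A.map (Int.cast : ℤ → ℝ)).mulVec x))
    (F : (Fin d → AddCircle (1 : ℝ)) ≃ₜ (Fin d → AddCircle (1 : ℝ)))
    (rt : (Fin d → AddCircle (1 : ℝ)) → (Fin d → ℝ)) (hrt : Continuous rt)
    (hr : ∀ x : Fin d → AddCircle (1 : ℝ), LA x = F x + torusProj d (rt x)) :
    ∃ h : C((Fin d → AddCircle (1 : ℝ)), (Fin d → AddCircle (1 : ℝ))),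
      Function.Surjective h ∧
      h.Homotopic (ContinuousMap.id (Fin d → AddCircle (1 : ℝ))) ∧
      ∀ x : Fin d → AddCircle (1 : ℝ), h (F x) = LA (h x) := by
  set R := A.map (Int.cast : ℤ → ℝ) with hR
  have hRdet : IsUnit R.det := by
    have : R.det = (A.det : ℝ) := by
      rw [hR]; exact (RingHom.map_det (Int.castRingHom ℝ) A).symm
    rw [this]
    rcases hdet with h | h <;> simp [h]
  have hinv1 : ∀ v, R.mulVec (R⁻¹.mulVec v) = v := fun v => by
    rw [Matrix.mulVec_mulVec, Matrix.mul_nonsing_inv R hRdet, Matrix.one_mulVec]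
  have hinv2 : ∀ v, R⁻¹.mulVec (R.mulVec v) = v := fun v => by
    rw [Matrix.mulVec_mulVec, Matrix.nonsing_inv_mul R hRdet, Matrix.one_mulVec]
  have hUinv : ∀ u ∈ U, R⁻¹.mulVec u ∈ U := by
    intro u hu
    rw [← hAU] at hu
    obtain ⟨v, hv, rfl⟩ := hu
    rw [Matrix.mulVecLin_apply, hinv2]
    exact hv
  let PS : (Fin d → ℝ) →ₗ[ℝ] (Fin d → ℝ) := S.subtype ∘ₗ S.projectionOnto U hSU
  have hPSc : Continuous PS := PS.continuous_of_finiteDimensional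
  have hPS : ∀ v, PS v ∈ S := fun v => (S.projectionOnto U hSU v).2
  have hPU : ∀ v, v - PS v ∈ U := fun v => by
    rw [← Submodule.projectionOnto_apply_eq_zero_iff hSU, map_sub]
    have := Submodule.projectionOnto_apply_left hSU (S.projectionOnto U hSU v)
    change _ - S.projectionOnto U hSU (S.projectionOnto U hSU v : Fin d → ℝ) = 0
    rw [this, sub_self]
  obtain ⟨ws, hwsc, hws⟩ := solve_contract d R.mulVecLin S C lam hC hlam0 hlam1 hstab
    F.symm F.symm.continuous (fun x => PS (rt (F.symm x)))
    (hPSc.comp (hrt.comp F.symm.continuous)) (fun x => hPS _)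
  obtain ⟨wu, hwuc, hwu⟩ := solve_contract d (R⁻¹).mulVecLin U C lam hC hlam0 hlam1 hunst
    F F.continuous (fun x => R⁻¹.mulVec (-(rt x - PS (rt x))))
    ((R⁻¹).mulVecLin.continuous_of_finiteDimensional.comp (hrt.sub (hPSc.comp hrt)).neg)
    (fun x => hUinv _ (U.neg_mem (hPU _)))
  set w := fun x => ws x + wu x with hw
  have hwc : Continuous w := hwsc.add hwuc
  have hweq : ∀ x, w (F x) = R.mulVec (w x) + rt x := by
    intro x
    have h1 := hws (F x)
    rw [F.symm_apply_apply, Matrix.mulVecLin_apply] at h1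
    have h2 := congrArg R.mulVec (hwu x)
    rw [Matrix.mulVecLin_apply, Matrix.mulVec_add, hinv1, hinv1] at h2
    simp only [hw, Matrix.mulVec_add]
    rw [h1, h2]
    abel
  have padd : ∀ x y, torusProj d (x + y) = torusProj d x + torusProj d y := fun x y => by
    funext i; simp [torusProj]
  have hcont : Continuous (fun y => y + torusProj d (w y)) :=
    continuous_id.add ((torusProj_continuous d).comp hwc)
  refine ⟨⟨fun y => y + torusProj d (w y), hcont⟩, surj_of_homotopic d w hwc, ?_, ?_⟩
  · refine ⟨⟨⟨fun z => z.2 + torusProj d ((1 - (z.1 : ℝ)) • w z.2), ?_⟩, ?_, ?_⟩⟩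
    · refine continuous_snd.add ((torusProj_continuous d).comp ?_)
      fun_prop
    · intro x; simp
    · intro x
      funext i
      simp [torusProj]
  · intro x
    change F x + torusProj d (w (F x)) = LA (x + torusProj d (w x))
    obtain ⟨x', rfl⟩ := torusProj_surjective d x
    rw [hweq, ← padd, hLA, Matrix.mulVec_add R x', padd (R.mulVec x'), ← hLA, hr, padd]
    abel
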